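/- Let J be a positive integer, let λ ∈ (0,1), and let ℓ := ⌈2λJ/(1+λ)⌉. Then (J² − (1+λ)·J·(J−ℓ)) / (ℓ(ℓ+1)/2) ≥ λJ² / ((2λJ/(1+λ) + 1)·(λJ/(1+λ) + 1)). -/

import Mathlib

section OrderedField

variable {K : Type*} [Field K] [LinearOrder K] [IsStrictOrderedRing K] {J lam ℓ : K}

theorem sub_le_one_sub_div_one_add_mul (hlam : 0 < 1 + lam)
    (hℓ : 2 * lam * J / (1 + lam) ≤ ℓ) : J - ℓ ≤ (1 - lam) / (1 + lam) * J := by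
  have hsplit : J - 2 * lam * J / (1 + lam) = (1 - lam) / (1 + lam) * J := by
    field_simp
    ring
  exact hsplit ▸ sub_le_sub_left hℓ J

theorem mul_sq_le_sq_sub_mul_sub (hJ : 0 ≤ J) (hlam : 0 < 1 + lam)
    (hℓ : 2 * lam * J / (1 + lam) ≤ ℓ) :
    lam * J ^ 2 ≤ J ^ 2 - (1 + lam) * J * (J - ℓ) :=
  calc
    lam * J ^ 2 = J ^ 2 - (1 + lam) * J * ((1 - lam) / (1 + lam) * J) := by
      field_simp
      ring
    _ ≤ J ^ 2 - (1 + lam) * J * (J - ℓ) := by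
      gcongr
      exact sub_le_one_sub_div_one_add_mul hlam hℓ

theorem mul_add_one_div_two_le_of_le_add_one {x : K} (hℓ : 0 ≤ ℓ) (hℓx : ℓ ≤ x + 1) :
    ℓ * (ℓ + 1) / 2 ≤ (x + 1) * (x / 2 + 1) :=
  calc
    ℓ * (ℓ + 1) / 2 ≤ (x + 1) * ((x + 1) + 1) / 2 := by
      have hx : 0 ≤ x + 1 := hℓ.trans hℓx
      gcongr
    _ = (x + 1) * (x / 2 + 1) := by ring

end OrderedField

theorem button_dual_value_general {K : Type*} [Field K] [LinearOrder K] [IsStrictOrderedRing K]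
    [FloorSemiring K] {J lam : K} (hJ : 0 < J) (hlam : 0 < lam) {ℓ : ℕ}
    (hℓ : ℓ = ⌈2 * lam * J / (1 + lam)⌉₊) :
    lam * J ^ 2 / ((2 * lam * J / (1 + lam) + 1) * (lam * J / (1 + lam) + 1)) ≤
      (J ^ 2 - (1 + lam) * J * (J - ℓ)) / ((ℓ : K) * (ℓ + 1) / 2) := by
  have hx : 0 < 2 * lam * J / (1 + lam) := by positivity
  have hxℓ : 2 * lam * J / (1 + lam) ≤ ℓ := hℓ ▸ Nat.le_ceil _
  have hℓx : (ℓ : K) ≤ 2 * lam * J / (1 + lam) + 1 := hℓ ▸ (Nat.ceil_lt_add_one hx.le).le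
  have hℓpos : (0 : K) < ℓ := hx.trans_le hxℓ
  have hnum : lam * J ^ 2 ≤ J ^ 2 - (1 + lam) * J * (J - ℓ) :=
    mul_sq_le_sq_sub_mul_sub hJ.le (by positivity) hxℓ
  have hden : (ℓ : K) * (ℓ + 1) / 2 ≤
      (2 * lam * J / (1 + lam) + 1) * (lam * J / (1 + lam) + 1) := by
    have hhalf : lam * J / (1 + lam) = 2 * lam * J / (1 + lam) / 2 := by ring
    rw [hhalf]
    exact mul_add_one_div_two_le_of_le_add_one hℓpos.le hℓx
  have hnum_nonneg : 0 ≤ J ^ 2 - (1 + lam) * J * (J - ℓ) := le_trans (by positivity) hnum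
  exact div_le_div₀ hnum_nonneg hnum (by positivity) hden

theorem button_dual_value (J : ℕ) (hJ : 0 < J) (lam : ℝ) (h0 : 0 < lam) (h1 : lam < 1)
    (ℓ : ℕ) (hℓ : ℓ = ⌈2 * lam * J / (1 + lam)⌉₊) :
    ((J : ℝ) ^ 2 - (1 + lam) * (J : ℝ) * ((J : ℝ) - (ℓ : ℝ))) /
        ((ℓ : ℝ) * ((ℓ : ℝ) + 1) / 2) ≥
      lam * (J : ℝ) ^ 2 /
        ((2 * lam * J / (1 + lam) + 1) * (lam * J / (1 + lam) + 1)) :=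
  button_dual_value_general (Nat.cast_pos.mpr hJ) h0 hℓ
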